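/- Let G = ⟨x, y | x y² x⁻¹ = y³⟩ and consider the generating family (x, y, z) of G where z maps to y⁴. Then the relation module M(G, {x, y, z}) is a free ℤG-module of rank 2; indeed it is freely generated by the images of the relators x y² x⁻¹ y⁻³ and z y⁻⁴. -/

import Mathlib

/-- The single relator `x y² x⁻¹ y⁻³` in the free group on two generators. -/
def bsRels : Set (FreeGroup (Fin 2)) :=
  {FreeGroup.of 0 * FreeGroup.of 1 ^ 2 * (FreeGroup.of 0)⁻¹ * (FreeGroup.of 1 ^ 3)⁻¹}

/-- The Baumslag–Solitar group `G = ⟨x, y | x y² x⁻¹ = y³⟩`. -/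
abbrev BSGroup := PresentedGroup bsRels

/-- `x ∈ G`. -/
def bsX : BSGroup := PresentedGroup.of 0

/-- `y ∈ G`. -/
def bsY : BSGroup := PresentedGroup.of 1

/-- The epimorphism `F(x,y,z) → G`, `x ↦ x`, `y ↦ y`, `z ↦ y⁴`. -/
def bsPi3 : FreeGroup (Fin 3) →* BSGroup :=
  FreeGroup.lift (fun i => if i = 0 then bsX else if i = 1 then bsY else bsY ^ 4)

/-- The relator `x y² x⁻¹ y⁻³ ∈ F(x,y,z)`. -/
def word1 : FreeGroup (Fin 3) :=
  FreeGroup.of 0 * FreeGroup.of 1 ^ 2 * (FreeGroup.of 0)⁻¹ * (FreeGroup.of 1 ^ 3)⁻¹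

/-- The relator `z y⁻⁴ ∈ F(x,y,z)`. -/
def word2 : FreeGroup (Fin 3) := FreeGroup.of 2 * (FreeGroup.of 1 ^ 4)⁻¹

/-!
The Fox derivatives `∂ᵢ : F → ℤG` restrict to homomorphisms on `R = ker π` that turn conjugation
into left multiplication, so they induce `ℤG`-linear maps `R/[R,R] → ℤG`. The relators generate
`R` as a normal subgroup, hence their classes span `R/[R,R]`. Their Fox Jacobian in the columns
`x`, `z` is triangular with diagonal entries `1 - x y² x⁻¹ = 1 - y³` and `1`. Since `y` has infinite
order in `G` (it acts on `ℚ` as a translation when `x` acts as multiplication by `3/2`), `1 - y³`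
is not a zero divisor, so the classes are linearly independent.
-/

open MonoidAlgebra

theorem exists_linearEquiv_prod_of_linearIndependent_pair {R M : Type*} [Ring R] [AddCommGroup M]
    [Module R M] {u v : M} (hli : LinearIndependent R ![u, v])
    (hspan : Submodule.span R {u, v} = ⊤) :
    ∃ e : (R × R) ≃ₗ[R] M, e (1, 0) = u ∧ e (0, 1) = v := by
  let b := Module.Basis.mk hli (by rw [Matrix.range_cons_cons_empty, hspan])
  refine ⟨(LinearEquiv.finTwoArrow R R).symm ≪≫ₗ b.equivFun.symm, ?_, ?_⟩
  · simp [b, Module.Basis.equivFun_symm_apply]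
  · simp [b, Module.Basis.equivFun_symm_apply]

section GroupRing

variable {G R : Type*} [Group G] [Ring R]

theorem coeff_mul_pow_of_mul_of_eq_self {a : R[G]} {g : G} (ha : a * of R G g = a)
    (z : G) (n : ℕ) : a.coeff (z * g ^ n) = a.coeff z := by
  induction n with
  | zero => rw [pow_zero, mul_one]
  | succ n ih =>
    rw [pow_succ, ← mul_assoc, ← ih]
    conv_lhs => rw [← ha]
    rw [of_apply, coeff_mul_single_mul, mul_one]

theorem one_sub_of_mem_nonZeroDivisorsRight {g : G} (hg : ¬IsOfFinOrder g) :
    1 - of R G g ∈ nonZeroDivisorsRight R[G] := by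
  intro a ha
  rw [mul_sub, mul_one, sub_eq_zero] at ha
  by_contra hne
  obtain ⟨z, hz⟩ : a.coeff.support.Nonempty :=
    Finsupp.support_nonempty_iff.2 (coeff_eq_zero.not.2 hne)
  have orbit_injective : Function.Injective fun n : ℕ ↦ z * g ^ n :=
    (mul_right_injective z).comp (injective_pow_iff_not_isOfFinOrder.2 hg)
  have orbit_mem_support (n : ℕ) : z * g ^ n ∈ (a.coeff.support : Set G) := by
    simpa [coeff_mul_pow_of_mul_of_eq_self ha.symm] using hz
  exact Set.infinite_of_injective_forall_mem orbit_injective orbit_mem_support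
    a.coeff.support.finite_toSet

end GroupRing

section FoxCalculus

variable {α G : Type*} [DecidableEq α] [Group G]

/-- Left multiplication by group elements, as an action of `G` by automorphisms of the additive
group of `ℤG`. -/
noncomputable def groupRingMulAut (G : Type*) [Group G] : G →* MulAut (Multiplicative ℤ[G]) :=
  (MulAutMultiplicative ℤ[G]).symm.toMonoidHom.comp (AddAut.mulLeft.comp (of ℤ G).toHomUnits)

/-- The Magnus-type homomorphism `w ↦ (∂ᵢ w, π w)` into `ℤG ⋊ G`. The multiplication of the
semidirect product encodes the product rule for the Fox derivative `∂ᵢ`. -/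
noncomputable def magnusHom (π : FreeGroup α →* G) (i : α) :
    FreeGroup α →* Multiplicative ℤ[G] ⋊[groupRingMulAut G] G :=
  FreeGroup.lift fun j ↦ ⟨Multiplicative.ofAdd ((Pi.single i 1 : α → ℤ[G]) j), π (FreeGroup.of j)⟩

/-- The Fox derivative `∂ᵢ` with respect to the `i`-th generator, with values pushed forward from
`ℤF` to `ℤG` along `π`. -/
noncomputable def foxDeriv (π : FreeGroup α →* G) (i : α) (w : FreeGroup α) : ℤ[G] :=
  Multiplicative.toAdd (magnusHom π i w).left

variable (π : FreeGroup α →* G) (i : α)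

theorem magnusHom_right (w : FreeGroup α) : (magnusHom π i w).right = π w := by
  have : SemidirectProduct.rightHom.comp (magnusHom π i) = π := by
    ext j
    simp [magnusHom]
  exact DFunLike.congr_fun this w

theorem foxDeriv_of (j : α) : foxDeriv π i (FreeGroup.of j) = (Pi.single i 1 : α → ℤ[G]) j := by
  simp [foxDeriv, magnusHom]

theorem foxDeriv_of_self : foxDeriv π i (FreeGroup.of i) = 1 := by
  rw [foxDeriv_of, Pi.single_eq_same]

theorem foxDeriv_of_of_ne {j : α} (h : j ≠ i) : foxDeriv π i (FreeGroup.of j) = 0 := by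
  rw [foxDeriv_of, Pi.single_eq_of_ne h]

theorem foxDeriv_one : foxDeriv π i 1 = 0 := by
  simp [foxDeriv]

theorem foxDeriv_mul (v w : FreeGroup α) :
    foxDeriv π i (v * w) = foxDeriv π i v + of ℤ G (π v) * foxDeriv π i w := by
  rw [← magnusHom_right π i v, foxDeriv, map_mul]
  rfl

theorem foxDeriv_inv (w : FreeGroup α) :
    foxDeriv π i w⁻¹ = -(of ℤ G (π w)⁻¹ * foxDeriv π i w) := by
  rw [← add_eq_zero_iff_eq_neg, ← map_inv, ← foxDeriv_mul, inv_mul_cancel, foxDeriv_one]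

theorem foxDeriv_pow (w : FreeGroup α) (n : ℕ) :
    foxDeriv π i (w ^ n) = (∑ k ∈ Finset.range n, of ℤ G (π w) ^ k) * foxDeriv π i w := by
  induction n with
  | zero => simp [foxDeriv_one]
  | succ n ih => rw [pow_succ, foxDeriv_mul, ih, map_pow, map_pow, Finset.sum_range_succ, add_mul]

theorem foxDeriv_conj_of_mem_ker (f : FreeGroup α) {r : FreeGroup α} (hr : r ∈ π.ker) :
    foxDeriv π i (f * r * f⁻¹) = of ℤ G (π f) * foxDeriv π i r := by
  rw [foxDeriv_mul, foxDeriv_mul, foxDeriv_inv, map_mul, MonoidHom.mem_ker.1 hr, mul_one, mul_neg,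
    ← mul_assoc, ← map_mul, mul_inv_cancel, map_one, one_mul, add_neg_cancel_comm]

end FoxCalculus

section RelationModule

variable {F G : Type*} [Group F] [Group G]

/-- The abelian group underlying the relation module of an epimorphism `π`, namely the
abelianization of `ker π` written additively. -/
abbrev RelationModule (π : F →* G) : Type _ := Additive (Abelianization π.ker)

/-- The class in the relation module of an element of `ker π`. -/
def relationClass {π : F →* G} (r : π.ker) : RelationModule π :=
  Additive.ofMul (Abelianization.of r)

/-- The `ℤG`-module structure on the relation module is the one induced by conjugation in `F`. -/
def IsConjugationModule (π : F →* G) [Module ℤ[G] (RelationModule π)] : Prop :=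
  ∀ (f : F) (r r' : π.ker), (r' : F) = f * r * f⁻¹ →
    of ℤ G (π f) • relationClass r = relationClass r'

variable {π : F →* G}

theorem relationClass_surjective : Function.Surjective (relationClass (π := π)) :=
  Additive.ofMul.surjective.comp QuotientGroup.mk_surjective

variable [Module ℤ[G] (RelationModule π)]

/-- The elements of `ker π` whose class lies in the submodule `M`, as a subgroup of `F`. -/
noncomputable def relatorSubgroup (M : Submodule ℤ[G] (RelationModule π)) : Subgroup F :=
  (M.toAddSubgroup.toSubgroup'.comap Abelianization.of).map π.ker.subtype

theorem mem_relatorSubgroup {M : Submodule ℤ[G] (RelationModule π)} {w : F} :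
    w ∈ relatorSubgroup M ↔ ∃ r : π.ker, relationClass r ∈ M ∧ r = w :=
  Iff.rfl

theorem IsConjugationModule.relatorSubgroup_normal (hπ : IsConjugationModule π)
    (M : Submodule ℤ[G] (RelationModule π)) : (relatorSubgroup M).Normal where
  conj_mem := by
    rintro _ ⟨r, hr, rfl⟩ f
    let r' : π.ker := ⟨f * r * f⁻¹, π.normal_ker.conj_mem r r.2 f⟩
    have hr' : relationClass r' ∈ M := hπ f r r' rfl ▸ M.smul_mem _ hr
    exact mem_relatorSubgroup.2 ⟨r', hr', rfl⟩

theorem IsConjugationModule.span_relationClass_eq_top (hπ : IsConjugationModule π)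
    {S : Set π.ker} (hS : π.ker ≤ Subgroup.normalClosure (Subtype.val '' S)) :
    Submodule.span ℤ[G] (relationClass '' S) = ⊤ := by
  set M := Submodule.span ℤ[G] (relationClass '' S)
  have := hπ.relatorSubgroup_normal M
  have hM : Subgroup.normalClosure (Subtype.val '' S) ≤ relatorSubgroup M := by
    apply Subgroup.normalClosure_le_normal
    rintro _ ⟨r, hr, rfl⟩
    exact mem_relatorSubgroup.2 ⟨r, Submodule.subset_span (Set.mem_image_of_mem _ hr), rfl⟩
  rw [Submodule.eq_top_iff']
  intro m
  obtain ⟨r, rfl⟩ := relationClass_surjective m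
  obtain ⟨s, hs, hsr⟩ := mem_relatorSubgroup.1 (hM (hS r.2))
  rwa [← Subtype.ext hsr]

end RelationModule

section FoxJacobian

variable {α G : Type*} [DecidableEq α] [Group G] {π : FreeGroup α →* G}

variable (π) in
/-- The additive map `R/[R,R] → ℤG` induced by the Fox derivative `∂ᵢ` on `R = ker π`. -/
noncomputable def foxAddHom (i : α) : RelationModule π →+ ℤ[G] :=
  MonoidHom.toAdditiveLeft <| Abelianization.lift
    { toFun r := Multiplicative.ofAdd (foxDeriv π i r)
      map_one' := by rw [Subgroup.coe_one, foxDeriv_one, ofAdd_zero]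
      map_mul' r s := by
        rw [Subgroup.coe_mul, foxDeriv_mul, MonoidHom.mem_ker.1 r.2, map_one, one_mul, ofAdd_add] }

theorem foxAddHom_relationClass (i : α) (r : π.ker) :
    foxAddHom π i (relationClass r) = foxDeriv π i r :=
  rfl

variable [Module ℤ[G] (RelationModule π)]

theorem IsConjugationModule.foxAddHom_of_smul (hπ : IsConjugationModule π)
    (hsurj : Function.Surjective π) (i : α) (g : G) (m : RelationModule π) :
    foxAddHom π i (of ℤ G g • m) = of ℤ G g * foxAddHom π i m := by
  obtain ⟨f, rfl⟩ := hsurj g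
  obtain ⟨r, rfl⟩ := relationClass_surjective m
  rw [hπ f r ⟨f * r * f⁻¹, π.normal_ker.conj_mem r r.2 f⟩ rfl, foxAddHom_relationClass,
    foxAddHom_relationClass, foxDeriv_conj_of_mem_ker π i f r.2]

/-- The `ℤG`-linear map `R/[R,R] → ℤG` induced by the Fox derivative `∂ᵢ` on `R = ker π`. -/
noncomputable def foxLinearMap (hπ : IsConjugationModule π) (hsurj : Function.Surjective π)
    (i : α) : RelationModule π →ₗ[ℤ[G]] ℤ[G] :=
  equivariantOfLinearOfComm (foxAddHom π i).toIntLinearMap (hπ.foxAddHom_of_smul hsurj i)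

theorem foxLinearMap_relationClass (hπ : IsConjugationModule π) (hsurj : Function.Surjective π)
    (i : α) (r : π.ker) : foxLinearMap hπ hsurj i (relationClass r) = foxDeriv π i r :=
  rfl

theorem IsConjugationModule.linearIndependent_pair_of_foxDeriv (hπ : IsConjugationModule π)
    (hsurj : Function.Surjective π) {ρ₁ ρ₂ : π.ker} {i j : α}
    (h₁ : foxDeriv π i ρ₁ ∈ nonZeroDivisorsRight ℤ[G]) (h₂₁ : foxDeriv π i ρ₂ = 0)
    (h₂ : foxDeriv π j ρ₂ ∈ nonZeroDivisorsRight ℤ[G]) :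
    LinearIndependent ℤ[G] ![relationClass ρ₁, relationClass ρ₂] := by
  rw [LinearIndependent.pair_iff]
  intro a b hab
  have jacobian_eq_zero (k : α) : a * foxDeriv π k ρ₁ + b * foxDeriv π k ρ₂ = 0 := by
    simpa [foxLinearMap_relationClass] using congrArg (foxLinearMap hπ hsurj k) hab
  have ha : a = 0 := by
    have := jacobian_eq_zero i
    rw [h₂₁, mul_zero, add_zero] at this
    exact h₁ a this
  have hb : b = 0 := by
    have := jacobian_eq_zero j
    rw [ha, zero_mul, zero_add] at this
    exact h₂ b this
  exact ⟨ha, hb⟩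

end FoxJacobian

section BaumslagSolitar

theorem bsX_mul_bsY_sq_mul_bsX_inv : bsX * bsY ^ 2 * bsX⁻¹ = bsY ^ 3 :=
  PresentedGroup.mk_eq_mk_of_mul_inv_mem (Set.mem_singleton _)

theorem lift_eq_one_of_mem_bsRels {H : Type*} [Group H] {a : Fin 2 → H}
    (h : a 0 * a 1 ^ 2 * (a 0)⁻¹ = a 1 ^ 3) : ∀ r ∈ bsRels, FreeGroup.lift a r = 1 := by
  rintro r rfl
  simp only [map_mul, map_inv, map_pow, FreeGroup.lift_apply_of]
  rw [h, mul_inv_cancel]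

theorem mulLeft₀_mul_addRight_mul_inv {K : Type*} [DivisionRing K] {c : K} (hc : c ≠ 0) (a : K) :
    Equiv.mulLeft₀ c hc * Equiv.addRight a * (Equiv.mulLeft₀ c hc)⁻¹ = Equiv.addRight (c * a) := by
  rw [mul_inv_eq_iff_eq_mul]
  ext t
  simp [mul_add]

/-- The action of `⟨x, y | x y² x⁻¹ = y³⟩` on the rational line in which `x` scales by `3/2` and
`y` translates by `1`. -/
noncomputable def bsAffineAction : BSGroup →* Equiv.Perm ℚ :=
  PresentedGroup.toGroup (f := ![Equiv.mulLeft₀ (3 / 2) (by norm_num), Equiv.addRight 1]) <|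
    lift_eq_one_of_mem_bsRels <| by
      simp only [Matrix.cons_val_zero, Matrix.cons_val_one, Matrix.cons_val_fin_one,
        Equiv.nsmul_addRight, mulLeft₀_mul_addRight_mul_inv]
      norm_num

theorem bsAffineAction_bsY : bsAffineAction bsY = Equiv.addRight 1 :=
  PresentedGroup.toGroup.of _

theorem not_isOfFinOrder_bsY : ¬IsOfFinOrder bsY := by
  rw [isOfFinOrder_iff_pow_eq_one]
  rintro ⟨n, hn, h⟩
  have translation_eq_one : Equiv.addRight (1 : ℚ) ^ n = 1 := by
    rw [← bsAffineAction_bsY, ← map_pow, h, map_one]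
  have : (n : ℚ) = 0 := by
    simpa using DFunLike.congr_fun translation_eq_one 0
  exact hn.ne' (by exact_mod_cast this)

theorem bsPi3_of_zero : bsPi3 (FreeGroup.of 0) = bsX := by
  simp [bsPi3]

theorem bsPi3_of_one : bsPi3 (FreeGroup.of 1) = bsY := by
  simp [bsPi3]

theorem bsPi3_of_two : bsPi3 (FreeGroup.of 2) = bsY ^ 4 := by
  simp [bsPi3]

theorem bsPi3_surjective : Function.Surjective bsPi3 := by
  rw [← MonoidHom.range_eq_top, eq_top_iff, ← PresentedGroup.closure_range_of, Subgroup.closure_le]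
  rintro _ ⟨i, rfl⟩
  fin_cases i
  · exact ⟨_, bsPi3_of_zero⟩
  · exact ⟨_, bsPi3_of_one⟩

theorem ker_bsPi3_le_ker {H : Type*} [Group H] (q : FreeGroup (Fin 3) →* H)
    (h₁ : q word1 = 1) (h₂ : q word2 = 1) : bsPi3.ker ≤ q.ker := by
  have hrel : q (FreeGroup.of 0) * q (FreeGroup.of 1) ^ 2 * (q (FreeGroup.of 0))⁻¹ =
      q (FreeGroup.of 1) ^ 3 := by
    simpa [word1, mul_inv_eq_one] using h₁
  have hz : q (FreeGroup.of 2) = q (FreeGroup.of 1) ^ 4 := by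
    simpa [word2, mul_inv_eq_one] using h₂
  let ψ : BSGroup →* H := PresentedGroup.toGroup
    (lift_eq_one_of_mem_bsRels (a := ![q (FreeGroup.of 0), q (FreeGroup.of 1)]) hrel)
  have hψx : ψ bsX = q (FreeGroup.of 0) := PresentedGroup.toGroup.of _
  have hψy : ψ bsY = q (FreeGroup.of 1) := PresentedGroup.toGroup.of _
  have hψ : ψ.comp bsPi3 = q := by
    ext i
    fin_cases i
    · simpa [bsPi3_of_zero] using hψx
    · simpa [bsPi3_of_one] using hψy
    · simp [bsPi3_of_two, hψy, hz]
  intro r hr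
  rw [MonoidHom.mem_ker, ← hψ, MonoidHom.comp_apply, MonoidHom.mem_ker.1 hr, map_one]

theorem ker_bsPi3_le_normalClosure : bsPi3.ker ≤ Subgroup.normalClosure {word1, word2} := by
  rw [← QuotientGroup.ker_mk' (Subgroup.normalClosure {word1, word2})]
  apply ker_bsPi3_le_ker <;>
    exact (QuotientGroup.eq_one_iff _).2 (Subgroup.subset_normalClosure (by simp))

variable {G : Type*} [Group G] (π : FreeGroup (Fin 3) →* G)

theorem foxDeriv_zero_word1 : foxDeriv π 0 word1 =
    1 - of ℤ G (π (FreeGroup.of 0) * π (FreeGroup.of 1) ^ 2 * (π (FreeGroup.of 0))⁻¹) := by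
  simp only [word1, foxDeriv_mul, foxDeriv_inv, foxDeriv_pow, foxDeriv_of_self,
    foxDeriv_of_of_ne π 0 (one_ne_zero : (1 : Fin 3) ≠ 0), map_mul, map_pow]
  noncomm_ring

theorem foxDeriv_zero_word2 : foxDeriv π 0 word2 = 0 := by
  simp [word2, foxDeriv_mul, foxDeriv_inv, foxDeriv_pow, foxDeriv_of]

theorem foxDeriv_two_word2 : foxDeriv π 2 word2 = 1 := by
  simp [word2, foxDeriv_mul, foxDeriv_inv, foxDeriv_pow, foxDeriv_of]

theorem foxDeriv_bsPi3_zero_word1_mem_nonZeroDivisorsRight :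
    foxDeriv bsPi3 0 word1 ∈ nonZeroDivisorsRight ℤ[BSGroup] := by
  rw [foxDeriv_zero_word1, bsPi3_of_zero, bsPi3_of_one, bsX_mul_bsY_sq_mul_bsX_inv]
  exact one_sub_of_mem_nonZeroDivisorsRight fun h ↦ not_isOfFinOrder_bsY (h.of_pow three_ne_zero)

end BaumslagSolitar

/-- For `G = ⟨x, y | x y² x⁻¹ = y³⟩` and the generating family `(x, y, z)` with
`z = y⁴`, the relation module `M(G,{x,y,z})` (the abelianization of
`R = ker (F(x,y,z) → G)` with `G` acting by conjugation) is a free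
`ℤG`-module of rank 2, freely generated by the images of the relators
`x y² x⁻¹ y⁻³` and `z y⁻⁴`. -/
theorem relationModule_three_generators_free_of_rank_two
    [Module (MonoidAlgebra ℤ BSGroup) (Additive (Abelianization ↥bsPi3.ker))]
    (hact : ∀ (f : FreeGroup (Fin 3)) (r r' : ↥bsPi3.ker),
      (r' : FreeGroup (Fin 3)) = f * ↑r * f⁻¹ →
      MonoidAlgebra.of ℤ BSGroup (bsPi3 f) • Additive.ofMul (Abelianization.of r) =
        Additive.ofMul (Abelianization.of r'))
    (ρ₁ ρ₂ : ↥bsPi3.ker)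
    (hρ₁ : (ρ₁ : FreeGroup (Fin 3)) = word1) (hρ₂ : (ρ₂ : FreeGroup (Fin 3)) = word2) :
    ∃ e : (MonoidAlgebra ℤ BSGroup × MonoidAlgebra ℤ BSGroup)
        ≃ₗ[MonoidAlgebra ℤ BSGroup] Additive (Abelianization ↥bsPi3.ker),
      e (1, 0) = Additive.ofMul (Abelianization.of ρ₁) ∧
      e (0, 1) = Additive.ofMul (Abelianization.of ρ₂) := by
  have hconj : IsConjugationModule bsPi3 := hact
  have hli : LinearIndependent ℤ[BSGroup] ![relationClass ρ₁, relationClass ρ₂] := by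
    apply hconj.linearIndependent_pair_of_foxDeriv bsPi3_surjective (i := 0) (j := 2)
    · rw [hρ₁]
      exact foxDeriv_bsPi3_zero_word1_mem_nonZeroDivisorsRight
    · rw [hρ₂, foxDeriv_zero_word2]
    · rw [hρ₂, foxDeriv_two_word2]
      exact one_mem _
  have hspan : Submodule.span ℤ[BSGroup] {relationClass ρ₁, relationClass ρ₂} = ⊤ := by
    rw [← Set.image_pair]
    apply hconj.span_relationClass_eq_top
    rw [Set.image_pair, hρ₁, hρ₂]
    exact ker_bsPi3_le_normalClosure
  exact exists_linearEquiv_prod_of_linearIndependent_pair hli hspan
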